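/- arXiv:2510.07753 — 2 statements merged into one kernel-verified Lean document; each statement's English description precedes it below -/
import Mathlib

section
/- Let Γ be a 3-homogeneous access structure on 7 players satisfying monotonicity, no-cloning and no-redundancy. Then |Γ_min| ≥ 7. -/
open Finset

/-- Monotonicity of an access structure on `n` players (players = `Fin n`). -/
def Monotonic {n : ℕ} (Γ : Finset (Fin n) → Prop) : Prop :=
  ∀ A B : Finset (Fin n), Γ A → A ⊆ B → Γ B

/-- No-cloning: a set is authorized iff its complement is not. -/
def NoCloning {n : ℕ} (Γ : Finset (Fin n) → Prop) : Prop :=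
  ∀ A : Finset (Fin n), Γ A ↔ ¬ Γ Aᶜ

/-- `A` is a minimal authorized set of `Γ`. -/
def IsMinimal {n : ℕ} (Γ : Finset (Fin n) → Prop) (A : Finset (Fin n)) : Prop :=
  Γ A ∧ ∀ B : Finset (Fin n), B ⊂ A → ¬ Γ B

/-- No-redundancy: every player lies in some minimal authorized set. -/
def NoRedundancy {n : ℕ} (Γ : Finset (Fin n) → Prop) : Prop :=
  ∀ i : Fin n, ∃ A : Finset (Fin n), IsMinimal Γ A ∧ i ∈ A

noncomputable section

/-- Combine an assignment on `A` and one on `Aᶜ` into a full bit string. -/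
def glue {m : ℕ} (A : Finset (Fin m)) (u : {x // x ∈ A} → Fin 2)
    (w : {x // x ∈ Aᶜ} → Fin 2) : Fin m → Fin 2 :=
  fun x => if h : x ∈ A then u ⟨x, h⟩ else w ⟨x, Finset.mem_compl.mpr h⟩

/-- Reduced density matrix of the pure state `ψ` on the qubit positions in `A`:
the partial trace over the positions outside `A` of `ψψ†`. -/
def reducedDensity {m : ℕ} (ψ : (Fin m → Fin 2) → ℂ) (A : Finset (Fin m)) :
    Matrix ({x // x ∈ A} → Fin 2) ({x // x ∈ A} → Fin 2) ℂ :=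
  fun u v => ∑ w : {x // x ∈ Aᶜ} → Fin 2,
    ψ (glue A u w) * (starRingEnd ℂ) (ψ (glue A v w))

/-- The reduction of `ψ` to `A` is maximally mixed, i.e. equals `2^{-|A|} · I`. -/
def MaximallyMixed {m : ℕ} (ψ : (Fin m → Fin 2) → ℂ) (A : Finset (Fin m)) : Prop :=
  reducedDensity ψ A =
    ((2 : ℂ) ^ A.card)⁻¹ •
      (1 : Matrix ({x // x ∈ A} → Fin 2) ({x // x ∈ A} → Fin 2) ℂ)

open Classical in
/-- Von Neumann entropy (natural logarithm): sum of `-λ log λ` over the eigenvalues. -/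
def vnEntropy {ι : Type} [Fintype ι] [DecidableEq ι] (ρ : Matrix ι ι ℂ) : ℝ :=
  if h : ρ.IsHermitian then ∑ i, Real.negMulLog (h.eigenvalues i) else 0

/-- Entropy of the reduction of `ψ` to the set `A` of qubit positions. -/
def Sent {m : ℕ} (ψ : (Fin m → Fin 2) → ℂ) (A : Finset (Fin m)) : ℝ :=
  vnEntropy (reducedDensity ψ A)

/-- The qubit positions (in `{0,1,…,n} = Fin (n+1)`, where `0` is the reference qubit)
of a set of players `A ⊆ Fin n`: player `i` holds position `i.succ`. -/
def posOf {n : ℕ} (A : Finset (Fin n)) : Finset (Fin (n + 1)) := A.image Fin.succ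

/-- `ψ` is a pure QSS state for the access structure `Γ`: a normalized pure state of
`n+1` qubits (position `0` being the reference qubit `R`) satisfying Recoverability
`S(R) + S(A) - S(R ∪ A) = 2 log 2` for authorized `A` and Secrecy
`S(R) + S(B) - S(R ∪ B) = 0` for unauthorized `B`. -/
structure IsPureQSSState {n : ℕ} (Γ : Finset (Fin n) → Prop)
    (ψ : (Fin (n + 1) → Fin 2) → ℂ) : Prop where
  normalized : ∑ x : Fin (n + 1) → Fin 2, ‖ψ x‖ ^ 2 = 1
  recover : ∀ A : Finset (Fin n), Γ A →
    Sent ψ {0} + Sent ψ (posOf A) - Sent ψ (insert 0 (posOf A)) = 2 * Real.log 2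
  secrecy : ∀ B : Finset (Fin n), ¬ Γ B →
    Sent ψ {0} + Sent ψ (posOf B) - Sent ψ (insert 0 (posOf B)) = 0

end

/-!
On `2k + 1` players every set of `k + 1` players is covered by the minimal authorized sets, all of
size `k`: if authorized, it is a minimal set plus one further player; if not, its complement is
authorized and, having size `k`, minimal. A minimal set accounts in this way for at most
`(k + 1) + 1` sets, whence `(2k + 1).choose k ≤ (k + 2) * |Γ_min|`. For `k = 3` this reads
`35 ≤ 5 * |Γ_min|`.
-/

open scoped FinsetFamily

theorem card_upShadow_le {α : Type*} [Fintype α] [DecidableEq α] {𝒜 : Finset (Finset α)} {r : ℕ}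
    (h𝒜 : (𝒜 : Set (Finset α)).Sized r) : #(∂⁺ 𝒜) ≤ #𝒜 * (Fintype.card α - r) := by
  rw [upShadow, sup_eq_biUnion]
  refine card_biUnion_le_card_mul _ _ _ fun A hA ↦ card_image_le.trans_eq ?_
  rw [card_compl, h𝒜 hA]

section MinimalSets

variable {n : ℕ} {Γ : Finset (Fin n) → Prop} {A S : Finset (Fin n)}

theorem isMinimal_iff_minimal : IsMinimal Γ A ↔ Minimal Γ A :=
  minimal_iff_forall_lt.symm

theorem exists_isMinimal_subset (hS : Γ S) : ∃ A ⊆ S, IsMinimal Γ A := by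
  simpa only [isMinimal_iff_minimal] using exists_minimal_le_of_wellFoundedLT Γ S hS

/-- The minimal access structure `Γ_min`, as a finset so that the shadow operations on set families
apply to it. -/
noncomputable def minimalSets (Γ : Finset (Fin n) → Prop) : Finset (Finset (Fin n)) :=
  (Set.toFinite {A | IsMinimal Γ A}).toFinset

theorem mem_minimalSets : A ∈ minimalSets Γ ↔ IsMinimal Γ A :=
  Set.Finite.mem_toFinset _

theorem ncard_setOf_isMinimal : {A | IsMinimal Γ A}.ncard = #(minimalSets Γ) :=
  Set.ncard_eq_toFinset_card _

end MinimalSets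

section Homogeneous

variable {n k : ℕ} {Γ : Finset (Fin n) → Prop} {S : Finset (Fin n)}

theorem sized_minimalSets (hhom : ∀ A, IsMinimal Γ A → #A = k) :
    (minimalSets Γ : Set (Finset (Fin n))).Sized k :=
  fun A hA ↦ hhom A (mem_minimalSets.1 hA)

theorem mem_minimalSets_of_card_eq (hhom : ∀ A, IsMinimal Γ A → #A = k) (hS : Γ S)
    (hcard : #S = k) : S ∈ minimalSets Γ := by
  obtain ⟨A, hAS, hA⟩ := exists_isMinimal_subset hS
  have hA_eq : A = S := eq_of_subset_of_card_le hAS (by rw [hhom A hA, hcard])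
  exact mem_minimalSets.2 (hA_eq ▸ hA)

theorem mem_upShadow_minimalSets_of_card_eq (hhom : ∀ A, IsMinimal Γ A → #A = k) (hS : Γ S)
    (hcard : #S = k + 1) : S ∈ ∂⁺ (minimalSets Γ) := by
  obtain ⟨A, hAS, hA⟩ := exists_isMinimal_subset hS
  exact mem_upShadow_iff_exists_mem_card_add_one.2
    ⟨A, mem_minimalSets.2 hA, hAS, by rw [hcard, hhom A hA]⟩

end Homogeneous

section OddPlayers

variable {k : ℕ} {Γ : Finset (Fin (2 * k + 1)) → Prop}

theorem powersetCard_subset_upShadow_union_compls (hΓ : ∀ A, Γ A ∨ Γ Aᶜ)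
    (hhom : ∀ A, IsMinimal Γ A → #A = k) :
    powersetCard (k + 1) univ ⊆ ∂⁺ (minimalSets Γ) ∪ (minimalSets Γ)ᶜˢ := by
  intro S hS
  have hcard : #S = k + 1 := (mem_powersetCard.1 hS).2
  rcases hΓ S with hS_auth | hSc_auth
  · exact mem_union_left _ (mem_upShadow_minimalSets_of_card_eq hhom hS_auth hcard)
  · have hcard_compl : #Sᶜ = k := by rw [card_compl, Fintype.card_fin, hcard]; lia
    exact mem_union_right _
      (mem_compls.2 (mem_minimalSets_of_card_eq hhom hSc_auth hcard_compl))

theorem stmt3_general (hΓ : ∀ A, Γ A ∨ Γ Aᶜ) (hhom : ∀ A, IsMinimal Γ A → #A = k) :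
    (2 * k + 1).choose k ≤ (k + 2) * {A | IsMinimal Γ A}.ncard := by
  have hshadow : #(∂⁺ (minimalSets Γ)) ≤ #(minimalSets Γ) * (k + 1) := by
    convert card_upShadow_le (sized_minimalSets hhom) using 2
    rw [Fintype.card_fin]
    lia
  calc (2 * k + 1).choose k
      = #(powersetCard (k + 1) (univ : Finset (Fin (2 * k + 1)))) := by
        rw [card_powersetCard, card_univ, Fintype.card_fin, Nat.choose_symm_half]
    _ ≤ #(∂⁺ (minimalSets Γ) ∪ (minimalSets Γ)ᶜˢ) :=
        card_le_card (powersetCard_subset_upShadow_union_compls hΓ hhom)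
    _ ≤ #(∂⁺ (minimalSets Γ)) + #(minimalSets Γ)ᶜˢ := card_union_le _ _
    _ ≤ #(minimalSets Γ) * (k + 1) + #(minimalSets Γ) := by rw [card_compls]; gcongr
    _ = (k + 2) * {A | IsMinimal Γ A}.ncard := by rw [ncard_setOf_isMinimal]; ring

end OddPlayers

theorem stmt3 (Γ : Finset (Fin 7) → Prop)
    (hmono : Monotonic Γ) (hnc : NoCloning Γ) (hnr : NoRedundancy Γ)
    (hhom : ∀ A : Finset (Fin 7), IsMinimal Γ A → A.card = 3) :
    7 ≤ {A : Finset (Fin 7) | IsMinimal Γ A}.ncard := by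
  have hcount : 35 ≤ 5 * {A | IsMinimal Γ A}.ncard :=
    stmt3_general (k := 3) (fun A ↦ or_iff_not_imp_right.2 (hnc A).2) hhom
  lia
end

section
/- Let Γ be a 3-homogeneous access structure on 7 players satisfying monotonicity, no-cloning and no-redundancy, and suppose that every 2-element subset of {1,…,7} is contained in at least one set of Γ_min. Then |Γ_min| = 7 and every 2-element subset of {1,…,7} is contained in exactly one set of Γ_min (i.e., Γ_min is a Fano plane). -/
open Finset

/-!
Authorized sets pairwise intersect, so `Γ_min` is an intersecting family of triples; no player lies
in all of them, because the complement of a single player is authorized. The point completing a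
pair to a triple must lie in every triple disjoint from that pair. Suppose two triples `{x, u, v}`
and `{y, u, v}` share a pair. Each of the three pairs formed from the other players is then
completed by `u` or by `v`, hence two of these pairs by the same point `o`. So the link of `o`, the
graph of the pairs that `o` completes to a triple, contains disjoint paths `b - a - c` and
`d - e - f`, where `b = x`, `c = y` and `a` is the other point of the shared pair. This forces the
pairs joining `{b, c}` to `{d, f}` into the link as well, and a triple avoiding `o`, which must meet
every pair of the link, is `{b, c, e}` or `{d, f, a}`. In the first case no point can complete
`{d, f}`, in the second none can complete `{b, c}`, so every triple contains `o`, a contradiction.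
Thus every pair lies in exactly one triple, and there are `21 / 3 = 7` triples.
-/

section SetFamilies

variable {α : Type*} {F : Set (Finset α)} {t k : ℕ}

lemma ncard_mul_choose_of_existsUnique [Fintype α] (hsized : F.Sized k)
    (huniq : ∀ P : Finset α, #P = t → ∃! A, A ∈ F ∧ P ⊆ A) :
    F.ncard * k.choose t = (Fintype.card α).choose t := by
  classical
  have hblocks : ∀ A ∈ F.toFinset,
      #((univ.powersetCard t).bipartiteAbove (fun A P ↦ P ⊆ A) A) = k.choose t := by
    intro A hA
    rw [← hsized (Set.mem_toFinset.1 hA), ← card_powersetCard]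
    congr 1
    ext P
    simp [mem_bipartiteAbove, mem_powersetCard, and_comm]
  have hpoints : ∀ P ∈ univ.powersetCard t,
      #(F.toFinset.bipartiteBelow (fun A P ↦ P ⊆ A) P) = 1 := by
    intro P hP
    simpa [card_eq_one_iff_existsUnique, mem_bipartiteBelow] using huniq P (mem_powersetCard.1 hP).2
  simpa [Set.ncard_eq_toFinset_card'] using card_mul_eq_card_mul _ hblocks hpoints

variable [DecidableEq α]

/-- An intersecting covering design of strength `t` with blocks of size `t + 1`; for `t = 2`, a
family of pairwise intersecting triples covering every pair. -/
structure IsIntersectingCover (t : ℕ) (F : Set (Finset α)) : Prop where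
  sized : F.Sized (t + 1)
  intersecting : F.Intersecting
  exists_superset : ∀ P : Finset α, #P = t → ∃ A ∈ F, P ⊆ A

namespace IsIntersectingCover

lemma exists_insert_mem (hF : IsIntersectingCover t F) {P : Finset α} (hP : #P = t) :
    ∃ w, insert w P ∈ F ∧ ∀ A ∈ F, Disjoint P A → w ∈ A := by
  obtain ⟨B, hB, hPB⟩ := hF.exists_superset P hP
  obtain ⟨w, -, rfl⟩ := exists_eq_insert_iff.2 ⟨hPB, by rw [hP, hF.sized hB]⟩
  refine ⟨w, hB, fun A hA hPA ↦ ?_⟩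
  by_contra hwA
  exact hF.intersecting hB hA (disjoint_insert_left.2 ⟨hwA, hPA⟩)

lemma insert_mem_of_inter_eq_singleton (hF : IsIntersectingCover t F) {A B P : Finset α} {o : α}
    (hA : A ∈ F) (hB : B ∈ F) (hAB : A ∩ B = {o}) (hP : #P = t) (hPA : Disjoint P A)
    (hPB : Disjoint P B) : insert o P ∈ F := by
  obtain ⟨w, hw, hmem⟩ := hF.exists_insert_mem hP
  have hwo : w ∈ A ∩ B := mem_inter.2 ⟨hmem A hA hPA, hmem B hB hPB⟩
  rw [hAB, mem_singleton] at hwo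
  rwa [← hwo]

lemma mem_of_path_endpoints_mem (hF : IsIntersectingCover 2 F) {o a b c d e f : α}
    (hnodup : [o, a, b, c, d, e, f].Nodup) (hba : {o, b, a} ∈ F) (hac : {o, a, c} ∈ F)
    (hde : {o, d, e} ∈ F) (hef : {o, e, f} ∈ F) {E : Finset α} (hE : E ∈ F)
    (hb : b ∈ E) (hc : c ∈ E) : o ∈ E := by
  by_contra ho
  have he : e ∈ E := by
    by_contra he
    have hd : d ∈ E := by simpa [ho, he] using hF.intersecting hde hE
    have hf : f ∈ E := by simpa [ho, he] using hF.intersecting hef hE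
    have hcard : #{b, c, d, f} ≤ #E := card_le_card (by grind)
    grind [hF.sized hE]
  obtain rfl : {b, c, e} = E := eq_of_subset_of_card_le (by grind) (by grind [hF.sized hE])
  obtain ⟨w, -, hw⟩ := hF.exists_insert_mem (P := {d, f}) (by grind)
  have hwE : w ∈ {b, c, e} := hw _ hE (by grind [disjoint_left])
  have hwba : w ∈ {o, b, a} := hw _ hba (by grind [disjoint_left])
  have hwac : w ∈ {o, a, c} := hw _ hac (by grind [disjoint_left])
  grind

lemma mem_of_disjoint_paths (hF : IsIntersectingCover 2 F) {o a b c d e f : α}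
    (hnodup : [o, a, b, c, d, e, f].Nodup) (hba : {o, b, a} ∈ F) (hac : {o, a, c} ∈ F)
    (hde : {o, d, e} ∈ F) (hef : {o, e, f} ∈ F) {E : Finset α} (hE : E ∈ F) :
    o ∈ E := by
  have hbd : {o, b, d} ∈ F := hF.insert_mem_of_inter_eq_singleton hac hef
    (by grind) (by grind) (by grind [disjoint_left]) (by grind [disjoint_left])
  have hbf : {o, b, f} ∈ F := hF.insert_mem_of_inter_eq_singleton hac hde
    (by grind) (by grind) (by grind [disjoint_left]) (by grind [disjoint_left])
  have hcd : {o, c, d} ∈ F := hF.insert_mem_of_inter_eq_singleton hba hef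
    (by grind) (by grind) (by grind [disjoint_left]) (by grind [disjoint_left])
  have hcf : {o, c, f} ∈ F := hF.insert_mem_of_inter_eq_singleton hba hde
    (by grind) (by grind) (by grind [disjoint_left]) (by grind [disjoint_left])
  by_contra ho
  have hends : (b ∈ E ∧ c ∈ E) ∨ (d ∈ E ∧ f ∈ E) := by
    have hE_bd : b ∉ E → d ∈ E := by simpa [ho] using hF.intersecting hbd hE
    have hE_bf : b ∉ E → f ∈ E := by simpa [ho] using hF.intersecting hbf hE
    have hE_cd : c ∉ E → d ∈ E := by simpa [ho] using hF.intersecting hcd hE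
    have hE_cf : c ∉ E → f ∈ E := by simpa [ho] using hF.intersecting hcf hE
    tauto
  rcases hends with ⟨hb, hc⟩ | ⟨hd, hf⟩
  · exact ho (hF.mem_of_path_endpoints_mem hnodup hba hac hde hef hE hb hc)
  · exact ho (hF.mem_of_path_endpoints_mem (by grind) hde hef hba hac hE hd hf)

lemma exists_insert_mem_of_common_pair (hF : IsIntersectingCover 2 F) {u v x y p q : α}
    (hnodup : [u, v, x, y, p, q].Nodup) (hx : {x, u, v} ∈ F) (hy : {y, u, v} ∈ F) :
    ∃ o, (o = u ∨ o = v) ∧ {o, p, q} ∈ F := by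
  obtain ⟨o, ho, hmem⟩ := hF.exists_insert_mem (P := {p, q}) (card_pair (by simp_all))
  have hox : o ∈ {x, u, v} := hmem _ hx (by grind [disjoint_left])
  have hoy : o ∈ {y, u, v} := hmem _ hy (by grind [disjoint_left])
  exact ⟨o, by grind, ho⟩

lemma mem_of_common_pair_of_path (hF : IsIntersectingCover 2 F) {o u v x y d e f : α}
    (hnodup : [u, v, x, y, d, e, f].Nodup) (hx : {x, u, v} ∈ F) (hy : {y, u, v} ∈ F)
    (ho : o = u ∨ o = v) (hde : {o, d, e} ∈ F) (hef : {o, e, f} ∈ F) {E : Finset α} (hE : E ∈ F) :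
    o ∈ E := by
  rcases ho with rfl | rfl
  · rw [insert_comm] at hx
    rw [insert_comm, pair_comm] at hy
    exact hF.mem_of_disjoint_paths (by grind) hx hy hde hef hE
  · rw [pair_comm, insert_comm] at hx
    rw [pair_comm, insert_comm, pair_comm] at hy
    exact hF.mem_of_disjoint_paths (by grind) hx hy hde hef hE

lemma exists_forall_mem_of_common_pair [Fintype α] (hF : IsIntersectingCover 2 F)
    (hcard : 7 ≤ Fintype.card α) {u v x y : α} (hnodup : [u, v, x, y].Nodup)
    (hx : {x, u, v} ∈ F) (hy : {y, u, v} ∈ F) : ∃ o, ∀ E ∈ F, o ∈ E := by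
  have hrest : 2 < #({u, v, x, y} : Finset α)ᶜ := by
    have hfour : #{u, v, x, y} ≤ 4 := card_le_four
    rw [card_compl]
    lia
  obtain ⟨d, hd, e, he, f, hf, hde, hdf, hef⟩ := two_lt_card.1 hrest
  have hseven : [u, v, x, y, d, e, f].Nodup := by simp_all [eq_comm]
  obtain ⟨i, hi, hide⟩ := hF.exists_insert_mem_of_common_pair (p := d) (q := e)
    (by grind) hx hy
  obtain ⟨j, hj, hjef⟩ := hF.exists_insert_mem_of_common_pair (p := e) (q := f)
    (by grind) hx hy
  obtain ⟨k, hk, hkfd⟩ := hF.exists_insert_mem_of_common_pair (p := f) (q := d)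
    (by grind) hx hy
  have hpigeon : i = j ∨ j = k ∨ k = i := by grind
  rcases hpigeon with rfl | rfl | rfl
  · exact ⟨i, fun _ ↦ hF.mem_of_common_pair_of_path (by grind) hx hy hi hide hjef⟩
  · exact ⟨j, fun _ ↦ hF.mem_of_common_pair_of_path (by grind) hx hy hj hjef hkfd⟩
  · exact ⟨k, fun _ ↦ hF.mem_of_common_pair_of_path (by grind) hx hy hk hkfd hide⟩

lemma eq_of_common_pair [Fintype α] (hF : IsIntersectingCover 2 F)
    (hcard : 7 ≤ Fintype.card α) (hmiss : ∀ o, ∃ E ∈ F, o ∉ E) {A B P : Finset α}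
    (hA : A ∈ F) (hB : B ∈ F) (hP : #P = 2) (hPA : P ⊆ A) (hPB : P ⊆ B) : A = B := by
  obtain ⟨x, hxP, rfl⟩ := exists_eq_insert_iff.2 ⟨hPA, by rw [hP, hF.sized hA]⟩
  obtain ⟨y, hyP, rfl⟩ := exists_eq_insert_iff.2 ⟨hPB, by rw [hP, hF.sized hB]⟩
  obtain ⟨u, v, huv, rfl⟩ := card_eq_two.1 hP
  by_contra hne
  obtain ⟨o, ho⟩ := hF.exists_forall_mem_of_common_pair hcard (by grind) hA hB
  obtain ⟨E, hE, hoE⟩ := hmiss o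
  exact hoE (ho E hE)

lemma existsUnique_superset [Fintype α] (hF : IsIntersectingCover 2 F)
    (hcard : 7 ≤ Fintype.card α) (hmiss : ∀ o, ∃ E ∈ F, o ∉ E) (P : Finset α) (hP : #P = 2) :
    ∃! A, A ∈ F ∧ P ⊆ A := by
  obtain ⟨A, hA, hPA⟩ := hF.exists_superset P hP
  exact ⟨A, ⟨hA, hPA⟩, fun B ⟨hB, hPB⟩ ↦ hF.eq_of_common_pair hcard hmiss hB hA hP hPB hPA⟩

end IsIntersectingCover

end SetFamilies

section AccessStructures

variable {n : ℕ} {Γ : Finset (Fin n) → Prop}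

lemma exists_isMinimal_subset_s4 {A : Finset (Fin n)} (hA : Γ A) : ∃ B ⊆ A, IsMinimal Γ B := by
  obtain ⟨B, hBA, hB⟩ := exists_minimal_le_of_wellFoundedLT Γ A hA
  exact ⟨B, hBA, minimal_iff_forall_lt.1 hB⟩

lemma intersecting_setOf_isMinimal (hmono : Monotonic Γ) (hnc : NoCloning Γ) :
    {A | IsMinimal Γ A}.Intersecting := by
  intro A hA B hB hdisj
  exact (hnc A).1 hA.1 (hmono B _ hB.1 (subset_compl_iff_disjoint_left.2 hdisj))

lemma exists_isMinimal_notMem (hnc : NoCloning Γ) (hcard : ∀ A, IsMinimal Γ A → 1 < #A)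
    (i : Fin n) : ∃ A, IsMinimal Γ A ∧ i ∉ A := by
  have hi : ¬ Γ {i} := by
    intro hi
    obtain ⟨B, hBi, hB⟩ := exists_isMinimal_subset_s4 hi
    have hB_le_one : #B ≤ 1 := by simpa using card_le_card hBi
    exact (hcard B hB).not_ge hB_le_one
  obtain ⟨A, hAi, hA⟩ := exists_isMinimal_subset_s4 (not_not.1 (mt (hnc {i}).2 hi))
  exact ⟨A, hA, fun hiA ↦ by simpa using hAi hiA⟩

end AccessStructures

theorem stmt4 (Γ : Finset (Fin 7) → Prop)
    (hmono : Monotonic Γ) (hnc : NoCloning Γ) (hnr : NoRedundancy Γ)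
    (hhom : ∀ A : Finset (Fin 7), IsMinimal Γ A → A.card = 3)
    (hcover : ∀ P : Finset (Fin 7), P.card = 2 →
      ∃ A : Finset (Fin 7), IsMinimal Γ A ∧ P ⊆ A) :
    {A : Finset (Fin 7) | IsMinimal Γ A}.ncard = 7 ∧
    ∀ P : Finset (Fin 7), P.card = 2 →
      ∃! A : Finset (Fin 7), IsMinimal Γ A ∧ P ⊆ A := by
  have hmin : IsIntersectingCover 2 {A | IsMinimal Γ A} :=
    ⟨hhom, intersecting_setOf_isMinimal hmono hnc, hcover⟩
  have hmiss := exists_isMinimal_notMem hnc fun A hA ↦ by rw [hhom A hA]; norm_num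
  have huniq := hmin.existsUnique_superset (by simp) hmiss
  have hcount : {A | IsMinimal Γ A}.ncard * 3 = 21 :=
    ncard_mul_choose_of_existsUnique hmin.sized huniq
  exact ⟨by lia, huniq⟩
end
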